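/- arXiv:1912.11728 — 4 statements merged into one kernel-verified Lean document; each statement's English description precedes it below -/
import Mathlib

section
/- Let α > 1 be a real number. There exists a constant c > 0, depending only on α, such that for every positive natural number d and all vectors D, Δ ∈ ℝ^d with D ≠ 0 and ‖Δ‖ ≤ ‖D‖/2, one has ‖D + Δ‖^α ≥ ‖D‖^α + α‖D‖^{α−2}⟨D, Δ⟩ + c‖D‖^{α−2}‖Δ‖². (This is the small-increment case of the second-order Taylor lower bound for the function x ↦ ‖x‖^α.) -/
open scoped RealInnerProductSpace

theorem aux_scalar (α : ℝ) (hα : 1 < α) :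
    ∃ c > (0 : ℝ), ∀ x t : ℝ, 1 / 2 ≤ x → x ≤ 3 / 2 → (x - 1) ^ 2 ≤ t →
      1 + α / 2 * (x ^ 2 - 1 - t) + c * t ≤ x ^ α := by
  rcases le_total 2 α with h | h
  · refine ⟨α / 2, by linarith, fun x t hx hx' ht => ?_⟩
    have h1 := one_add_mul_self_le_rpow_one_add (s := x ^ 2 - 1) (p := α / 2)
      (by nlinarith) (by linarith)
    have h2 : (1 + (x ^ 2 - 1)) ^ (α / 2) = x ^ α := by
      rw [show 1 + (x ^ 2 - 1) = x ^ (2 : ℝ) by rw [Real.rpow_two]; ring,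
        ← Real.rpow_mul (by linarith)]
      congr 1; ring
    rw [h2] at h1
    linarith
  · refine ⟨(α - 1) ^ 2 / 2, by have : 0 < α - 1 := by linarith
                                positivity, fun x t hx hx' ht => ?_⟩
    have hx0 : 0 < x := by linarith
    have h1 := rpow_one_add_le_one_add_mul_self (s := x⁻¹ - 1) (p := α - 1)
      (by have := inv_pos.2 hx0; linarith) (by linarith) (by linarith)
    rw [show 1 + (x⁻¹ - 1) = x⁻¹ by ring, Real.inv_rpow hx0.le] at h1
    have hp : 0 < x ^ (α - 1) := Real.rpow_pos_of_pos hx0 _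
    have e : x ^ α = x * x ^ (α - 1) := by
      rw [mul_comm, ← Real.rpow_add_one hx0.ne']; congr 1; ring
    set y := x ^ (α - 1)
    have hden : 0 < x + (α - 1) * (1 - x) := by nlinarith
    have hden2 : x + (α - 1) * (1 - x) ≤ 2 := by nlinarith
    have h2 : x ≤ y * (x + (α - 1) * (1 - x)) := by
      have := mul_le_mul_of_nonneg_left h1 (mul_pos hx0 hp).le
      have e1 : x * y * y⁻¹ = x := by field_simp
      have e2 : x * y * (1 + (α - 1) * (x⁻¹ - 1)) = y * (x + (α - 1) * (1 - x)) := by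
        field_simp
      rwa [e1, e2] at this
    have h3 : 1 + α * (x - 1) + (α - 1) ^ 2 / 2 * (x - 1) ^ 2 ≤ x * y := by
      refine le_of_mul_le_mul_right ?_ hden
      have h4 : x * x ≤ x * y * (x + (α - 1) * (1 - x)) := by
        rw [mul_assoc]; exact mul_le_mul_of_nonneg_left h2 hx0.le
      have h5 := mul_le_mul_of_nonneg_left hden2
        (show 0 ≤ (α - 1) ^ 2 / 2 * (x - 1) ^ 2 by positivity)
      refine le_trans ?_ h4
      linarith
    rw [e]
    have h6 : 0 ≤ (α / 2 - (α - 1) ^ 2 / 2) := by nlinarith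
    nlinarith [mul_nonneg h6 (sub_nonneg.2 ht)]

/-- Small-increment second-order Taylor lower bound for `x ↦ ‖x‖^α`, `α > 1`:
for `‖Δ‖ ≤ ‖D‖/2`,
`‖D + Δ‖^α ≥ ‖D‖^α + α ‖D‖^(α-2) ⟪D, Δ⟫ + c ‖D‖^(α-2) ‖Δ‖²`. -/
theorem stmt_3 (α : ℝ) (hα : 1 < α) :
    ∃ c > (0 : ℝ), ∀ (d : ℕ), 0 < d →
      ∀ (D Δ : EuclideanSpace ℝ (Fin d)), D ≠ 0 → ‖Δ‖ ≤ ‖D‖ / 2 →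
        ‖D + Δ‖ ^ α ≥ ‖D‖ ^ α + α * ‖D‖ ^ (α - 2) * ⟪D, Δ⟫
          + c * ‖D‖ ^ (α - 2) * ‖Δ‖ ^ 2 := by
  obtain ⟨c, hc, H⟩ := aux_scalar α hα
  refine ⟨c, hc, fun d _ D Δ hD hΔ => ?_⟩
  have hr : 0 < ‖D‖ := norm_pos_iff.2 hD
  have hn := norm_add_sq_real D Δ
  have u1 : ‖D + Δ‖ ≤ ‖D‖ + ‖Δ‖ := norm_add_le D Δ
  have u2 : ‖D‖ ≤ ‖D + Δ‖ + ‖Δ‖ := by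
    simpa using norm_sub_le (D + Δ) Δ
  have hN : 0 ≤ ‖D + Δ‖ := norm_nonneg _
  generalize ‖D + Δ‖ = N at *
  generalize ‖D‖ = r at *
  generalize ‖Δ‖ = q at *
  generalize (⟪D, Δ⟫ : ℝ) = s at *
  have h := H (N / r) (q ^ 2 / r ^ 2) (by rw [le_div_iff₀ hr]; linarith)
    (by rw [div_le_iff₀ hr]; linarith)
    (by
      rw [show N / r - 1 = (N - r) / r by field_simp, div_pow]
      gcongr ?_ / _
      exact sq_le_sq' (by linarith) (by linarith))
  rw [Real.div_rpow hN hr.le, le_div_iff₀ (Real.rpow_pos_of_pos hr _)] at h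
  have e : r ^ α = r ^ (α - 2) * r ^ 2 := by
    rw [← Real.rpow_two, ← Real.rpow_add hr]; congr 1; ring
  refine ge_iff_le.2 (le_trans (le_of_eq ?_) h)
  rw [e, div_pow, hn]
  field_simp
  ring
end

section
/- Let α > 1 be a real number. There exists a constant c > 0, depending only on α, such that for every positive natural number d and all vectors D, Δ ∈ ℝ^d with D ≠ 0 and ‖Δ‖ > ‖D‖/2, one has ‖D + Δ‖^α ≥ ‖D‖^α + α‖D‖^{α−2}⟨D, Δ⟩ + c‖Δ‖^α. (This is the large-increment case of the second-order Taylor lower bound for the function x ↦ ‖x‖^α.) -/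
open scoped RealInnerProductSpace

lemma aux_one (α : ℝ) (hα : 1 < α) (t k : ℝ) (ht : 0 < t) (hk : -1 ≤ k) (hk1 : k ≤ 1) :
    1 + α * (t * k) < (1 + 2 * t * k + t ^ 2) ^ (α / 2) := by
  have hk2 : k ^ 2 ≤ 1 := by nlinarith
  have hX : (1 + t * k) ^ 2 ≤ 1 + 2 * t * k + t ^ 2 := by
    nlinarith [mul_nonneg (sq_nonneg t) (sub_nonneg.2 hk2)]
  by_cases hb : t * k = 0
  · have : 1 + 2 * t * k + t ^ 2 = 1 + t ^ 2 := by linear_combination 2 * hb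
    rw [this, hb]
    have := Real.one_lt_rpow (show 1 < 1 + t ^ 2 by nlinarith [sq_pos_of_pos ht])
      (show 0 < α / 2 by linarith)
    linarith
  by_cases h1 : 0 ≤ 1 + t * k
  · have h2 := one_add_mul_self_lt_rpow_one_add (s := t * k) (by linarith) hb hα
    have h3 : ((1 + t * k) ^ 2) ^ (α / 2) = (1 + t * k) ^ α := by
      rw [← Real.rpow_natCast, ← Real.rpow_mul h1]
      congr 1
      push_cast
      ring
    have h4 := Real.rpow_le_rpow (sq_nonneg _) hX (show 0 ≤ α / 2 by linarith)
    linarith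
  · have h5 : 0 ≤ 1 + 2 * t * k + t ^ 2 := le_trans (sq_nonneg _) hX
    have h6 := Real.rpow_nonneg h5 (α / 2)
    push Not at h1
    nlinarith

lemma aux_two (α : ℝ) (hα : 1 < α) (τ k : ℝ) (ht : 0 ≤ τ) (hk : -1 ≤ k) (hk1 : k ≤ 1) :
    0 < (1 + 2 * τ * k + τ ^ 2) ^ (α / 2) - τ ^ α - α * τ ^ (α - 1) * k := by
  rcases ht.eq_or_lt with h | h
  · subst h
    rw [Real.zero_rpow (by linarith), Real.zero_rpow (by linarith)]
    norm_num
  · have h1 := aux_one α hα τ⁻¹ k (inv_pos.2 h) hk hk1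
    have hp : 0 < τ ^ α := Real.rpow_pos_of_pos h _
    have h2 := mul_lt_mul_of_pos_left h1 hp
    have h3 : τ ^ α = (τ ^ 2) ^ (α / 2) := by
      rw [← Real.rpow_natCast, ← Real.rpow_mul ht]
      congr 1
      push_cast
      ring
    have hnn : 0 ≤ 1 + 2 * τ⁻¹ * k + τ⁻¹ ^ 2 := by nlinarith [sq_nonneg (τ⁻¹ + k)]
    have h4 : τ ^ α * (1 + 2 * τ⁻¹ * k + τ⁻¹ ^ 2) ^ (α / 2)
        = (1 + 2 * τ * k + τ ^ 2) ^ (α / 2) := by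
      rw [h3, ← Real.mul_rpow (sq_nonneg _) hnn]
      congr 1
      field_simp
      ring
    have h5 : τ ^ (α - 1) = τ ^ α * τ⁻¹ := by
      rw [Real.rpow_sub_one h.ne']
      rfl
    rw [h4] at h2
    rw [h5]
    linarith

lemma aux_three (α : ℝ) (hα : 1 < α) : ∃ c > (0 : ℝ), ∀ τ k : ℝ, 0 ≤ τ → τ ≤ 2 → -1 ≤ k → k ≤ 1 →
    c ≤ (1 + 2 * τ * k + τ ^ 2) ^ (α / 2) - τ ^ α - α * τ ^ (α - 1) * k := by
  have hc : IsCompact (Set.Icc (0:ℝ) 2 ×ˢ Set.Icc (-1:ℝ) 1) := isCompact_Icc.prod isCompact_Icc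
  have hcont : Continuous (fun p : ℝ × ℝ =>
      (1 + 2 * p.1 * p.2 + p.1 ^ 2) ^ (α / 2) - p.1 ^ α - α * p.1 ^ (α - 1) * p.2) := by
    have h1 : Continuous (fun p : ℝ × ℝ => (1 + 2 * p.1 * p.2 + p.1 ^ 2) ^ (α / 2)) :=
      Continuous.rpow_const (by fun_prop) (fun _ => Or.inr (by linarith))
    have h2 : Continuous (fun p : ℝ × ℝ => p.1 ^ α) :=
      Continuous.rpow_const (by fun_prop) (fun _ => Or.inr (by linarith))
    have h3 : Continuous (fun p : ℝ × ℝ => p.1 ^ (α - 1)) :=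
      Continuous.rpow_const (by fun_prop) (fun _ => Or.inr (by linarith))
    exact (h1.sub h2).sub ((continuous_const.mul h3).mul continuous_snd)
  obtain ⟨p, hp, hmin⟩ := hc.exists_isMinOn ⟨(0, 0), by simp⟩ hcont.continuousOn
  refine ⟨_, aux_two α hα p.1 p.2 hp.1.1 hp.2.1 hp.2.2, fun τ k a b c d => ?_⟩
  exact hmin (show (τ, k) ∈ _ from ⟨⟨a, b⟩, ⟨c, d⟩⟩)

/-- Large-increment second-order Taylor lower bound for `x ↦ ‖x‖^α`, `α > 1`:
for `‖Δ‖ > ‖D‖/2`,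
`‖D + Δ‖^α ≥ ‖D‖^α + α ‖D‖^(α-2) ⟪D, Δ⟫ + c ‖Δ‖^α`. -/
theorem stmt_4 (α : ℝ) (hα : 1 < α) :
    ∃ c > (0 : ℝ), ∀ (d : ℕ), 0 < d →
      ∀ (D Δ : EuclideanSpace ℝ (Fin d)), D ≠ 0 → ‖Δ‖ > ‖D‖ / 2 →
        ‖D + Δ‖ ^ α ≥ ‖D‖ ^ α + α * ‖D‖ ^ (α - 2) * ⟪D, Δ⟫
          + c * ‖Δ‖ ^ α := by
  obtain ⟨c, hc, H⟩ := aux_three α hα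
  refine ⟨c, hc, fun d _ D Δ hD hΔ => ?_⟩
  have hr : 0 < ‖D‖ := norm_pos_iff.2 hD
  have hu : 0 < ‖Δ‖ := by linarith
  have hs := norm_add_sq_real D Δ
  have hs0 := norm_nonneg (D + Δ)
  have hin := abs_le.1 (abs_real_inner_le_norm D Δ)
  generalize ‖D + Δ‖ = s at *
  generalize ‖D‖ = r at *
  generalize ‖Δ‖ = u at *
  generalize ⟪D, Δ⟫ = i at *
  have hru : 0 < r * u := mul_pos hr hu
  have h := H (r / u) (i / (r * u)) (by positivity) (by rw [div_le_iff₀ hu]; linarith)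
    (by rw [le_div_iff₀ hru]; linarith) (by rw [div_le_iff₀ hru]; linarith)
  have hp : 0 < u ^ α := Real.rpow_pos_of_pos hu _
  have h1 : 1 + 2 * (r / u) * (i / (r * u)) + (r / u) ^ 2 = (s / u) ^ 2 := by
    rw [div_pow s, hs]
    field_simp
    ring
  have h2 : ((s / u) ^ 2) ^ (α / 2) = s ^ α / u ^ α := by
    rw [← Real.rpow_natCast, ← Real.rpow_mul (by positivity), ← Real.div_rpow hs0 hu.le]
    congr 1
    push_cast
    ring
  have h3 : (r / u) ^ (α - 1) = r ^ (α - 2) * r * u / u ^ α := by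
    rw [Real.div_rpow hr.le hu.le, Real.rpow_sub_one hu.ne',
      show α - 1 = (α - 2) + 1 by ring, Real.rpow_add_one hr.ne']
    field_simp
  rw [h1, h2, h3, Real.div_rpow hr.le hu.le] at h
  have h4 : s ^ α / u ^ α - r ^ α / u ^ α - α * (r ^ (α - 2) * r * u / u ^ α) * (i / (r * u))
      = (s ^ α - r ^ α - α * r ^ (α - 2) * i) / u ^ α := by
    field_simp
  rw [h4, le_div_iff₀ hp] at h
  linarith
end

section
/- Let α > 1 be a real number. There exists a constant c > 0, depending only on α, such that the following holds for every positive natural number d, every natural number N, every D ∈ ℝ^d with D ≠ 0, and every family Δ : Fin N → ℝ^d satisfying ∑_j Δ_j = 0: ∑_j ‖D + Δ_j‖^α ≥ N‖D‖^α + c · ∑_j (‖D‖^{α−2}‖Δ_j‖² · 1{‖Δ_j‖ ≤ ‖D‖/2} + ‖Δ_j‖^α · 1{‖Δ_j‖ > ‖D‖/2}). (The linear terms of the Taylor expansion sum to zero because ∑_j Δ_j = 0.) -/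
theorem oneD_aux (α : ℝ) (hα : 1 < α) (R : ℝ) (hR : 1 ≤ R) :
    ∃ c > (0 : ℝ), ∀ r : ℝ, 0 ≤ r → r ≤ R → 1 + α * (r - 1) + c * (r - 1) ^ 2 ≤ r ^ α := by
  rcases le_total 2 α with h2 | h2
  · refine ⟨α / 2, by linarith, fun r hr _ => ?_⟩
    have hb := one_add_mul_self_le_rpow_one_add (s := r ^ 2 - 1) (by nlinarith [sq_nonneg r])
      (p := α / 2) (by linarith)
    have e : (1 + (r ^ 2 - 1)) ^ (α / 2) = r ^ α := by
      rw [show 1 + (r ^ 2 - 1) = r ^ (2 : ℝ) by rw [Real.rpow_two]; ring, ← Real.rpow_mul hr]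
      congr 1; ring
    rw [e] at hb
    nlinarith
  · refine ⟨(α - 1) ^ 2 / R, by have : 0 < α - 1 := by linarith
                                positivity, fun r hr hrR => ?_⟩
    rcases hr.eq_or_lt with h0 | h0
    · subst h0
      rw [Real.zero_rpow (by linarith)]
      have : (α - 1) ^ 2 / R ≤ (α - 1) ^ 2 := div_le_self (sq_nonneg _) hR
      nlinarith
    · have hb := rpow_one_add_le_one_add_mul_self (s := 1 / r - 1)
        (by have : 0 < 1 / r := by positivity
            linarith) (p := α - 1) (by linarith) (by linarith)
      rw [show 1 + (1 / r - 1) = r⁻¹ by rw [one_div]; ring, Real.inv_rpow hr] at hb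
      have hp : 0 < r ^ (α - 1) := Real.rpow_pos_of_pos h0 _
      have e : r ^ α = r * r ^ (α - 1) := by
        rw [Real.rpow_sub_one h0.ne']; field_simp
      set y := r ^ (α - 1) with hy
      set q := 1 + (2 - α) * (r - 1) with hq
      have hq0 : 0 < q := by rw [hq]; nlinarith
      have hqR : q ≤ R := by rw [hq]; nlinarith
      have h1 : r ≤ q * y := by
        have h3 := mul_le_mul_of_nonneg_left hb (mul_pos h0 hp).le
        have e1 : r * y * y⁻¹ = r := by field_simp
        have e2 : r * y * (1 + (α - 1) * (1 / r - 1)) = q * y := by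
          rw [hq]; field_simp; ring
        rwa [e1, e2] at h3
      have h4 : (α - 1) ^ 2 / R * (r - 1) ^ 2 ≤ (α - 1) ^ 2 / q * (r - 1) ^ 2 := by
        gcongr
      have h5 : 1 + α * (r - 1) + (α - 1) ^ 2 / q * (r - 1) ^ 2 = r ^ 2 / q := by
        field_simp; rw [hq]; ring
      have h6 : r ^ 2 / q ≤ r * y := by
        rw [div_le_iff₀ hq0]; nlinarith
      rw [e]; linarith

theorem pt_aux (α : ℝ) (hα : 1 < α) :
    ∃ c > (0 : ℝ), ∀ r s t : ℝ, 0 ≤ r → 0 ≤ s → t ≤ s → -s ≤ t → r ^ 2 = 1 + 2 * t + s ^ 2 →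
      1 + α * t + c * (if s ≤ 1 / 2 then s ^ 2 else s ^ α) ≤ r ^ α := by
  obtain ⟨K, hK2, hK⟩ : ∃ K : ℝ, 2 ≤ K ∧
      ∀ s, K ≤ s → (2 : ℝ) ^ (α + 1) * (1 + α) ≤ s ^ (α - 1) := by
    have := (tendsto_rpow_atTop (y := α - 1) (by linarith)).eventually_ge_atTop
      ((2 : ℝ) ^ (α + 1) * (1 + α))
    obtain ⟨K, h⟩ := Filter.eventually_atTop.1 this
    exact ⟨max 2 K, le_max_left _ _, fun s hs => h s ((le_max_right _ _).trans hs)⟩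
  obtain ⟨c, hc, hcc⟩ := oneD_aux α hα (K + 1) (by linarith)
  set m := min c (α / 2) with hm
  have hm0 : 0 < m := lt_min hc (by linarith)
  have hKα : 0 < K ^ α := Real.rpow_pos_of_pos (by linarith) _
  have h2α : 0 < (2 : ℝ) ^ (α + 1) := by positivity
  refine ⟨min (min m (m / (4 * K ^ α))) (1 / 2 ^ (α + 1)), by positivity, ?_⟩
  intro r s t hr hs hts hst he
  set C := min (min m (m / (4 * K ^ α))) (1 / 2 ^ (α + 1)) with hC
  have hC1 : C ≤ m := (min_le_left _ _).trans (min_le_left _ _)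
  have hC2 : C ≤ m / (4 * K ^ α) := (min_le_left _ _).trans (min_le_right _ _)
  have hC3 : C ≤ 1 / 2 ^ (α + 1) := min_le_right _ _
  rcases le_total K s with h | h
  · rw [if_neg (by linarith)]
    have hrs : s / 2 ≤ r := by
      have : s - 1 ≤ r := le_of_abs_le (abs_le_of_sq_le_sq (by nlinarith) hr)
      linarith
    have h1 : (s / 2) ^ α ≤ r ^ α := Real.rpow_le_rpow (by linarith) hrs (by linarith)
    have hs0 : 0 < s := by linarith
    have e1 : (s / 2) ^ α = 2 * (s ^ α / 2 ^ (α + 1)) := by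
      rw [Real.div_rpow hs (by norm_num), Real.rpow_add_one (by norm_num)]; field_simp
    have h2 : (1 + α) * s ≤ s ^ α / 2 ^ (α + 1) := by
      have h3 := hK s h
      rw [Real.rpow_sub_one hs0.ne', le_div_iff₀ hs0] at h3
      rw [le_div_iff₀ h2α]; linarith
    have h4 : C * s ^ α ≤ s ^ α / 2 ^ (α + 1) := by
      have := mul_le_mul_of_nonneg_right hC3 (Real.rpow_nonneg hs α)
      calc _ ≤ _ := this
        _ = _ := by ring
    nlinarith
  · have hrs : r ≤ K + 1 := by
      have : r ≤ 1 + s := le_of_abs_le (abs_le_of_sq_le_sq (by nlinarith) (by linarith))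
      linarith
    have hb : 1 + t ≤ r := le_of_abs_le (abs_le_of_sq_le_sq (by nlinarith) hr)
    have h1 := hcc r hr hrs
    have h2 : m * s ^ 2 ≤ c * (r - 1) ^ 2 + α * (r - 1 - t) := by
      have e : s ^ 2 = (r - 1) ^ 2 + 2 * (r - 1 - t) := by linarith
      rw [e]
      have a1 := mul_le_mul_of_nonneg_right (min_le_left c (α / 2)) (sq_nonneg (r - 1))
      have a2 := mul_le_mul_of_nonneg_right (min_le_right c (α / 2)) (sub_nonneg.2 hb)
      rw [← hm] at a1 a2
      linarith
    have h3 : C * (if s ≤ 1 / 2 then s ^ 2 else s ^ α) ≤ m * s ^ 2 := by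
      split_ifs with h5
      · exact mul_le_mul_of_nonneg_right hC1 (sq_nonneg s)
      · have a1 : s ^ α ≤ K ^ α := Real.rpow_le_rpow hs h (by linarith)
        have a2 : 1 ≤ 4 * s ^ 2 := by nlinarith
        calc C * s ^ α ≤ m / (4 * K ^ α) * s ^ α :=
              mul_le_mul_of_nonneg_right hC2 (Real.rpow_nonneg hs α)
          _ ≤ m / (4 * K ^ α) * K ^ α := by gcongr
          _ = m / 4 := by field_simp
          _ ≤ _ := by nlinarith
    linarith


/-- Summed second-order Taylor lower bound for `x ↦ ‖x‖^α`, `α > 1`: if the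
fluctuations `Δ j` sum to zero, the linear terms cancel, and
`∑ ‖D + Δ j‖^α ≥ N ‖D‖^α + c ∑ (‖D‖^(α-2) ‖Δ j‖² 1{‖Δ j‖ ≤ ‖D‖/2}
  + ‖Δ j‖^α 1{‖Δ j‖ > ‖D‖/2})`. -/
theorem stmt_5 (α : ℝ) (hα : 1 < α) :
    ∃ c > (0 : ℝ), ∀ (d : ℕ), 0 < d → ∀ (N : ℕ)
      (D : EuclideanSpace ℝ (Fin d)), D ≠ 0 →
      ∀ (Δ : Fin N → EuclideanSpace ℝ (Fin d)), (∑ j, Δ j) = 0 →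
        ∑ j, ‖D + Δ j‖ ^ α ≥ (N : ℝ) * ‖D‖ ^ α +
          c * ∑ j, (if ‖Δ j‖ ≤ ‖D‖ / 2 then ‖D‖ ^ (α - 2) * ‖Δ j‖ ^ 2
                    else ‖Δ j‖ ^ α) := by

  obtain ⟨c, hc, h⟩ := pt_aux α hα
  refine ⟨c, hc, fun d _ N D hD Δ hΔ => ?_⟩
  have hn : 0 < ‖D‖ := norm_pos_iff.2 hD
  have hnα : 0 < ‖D‖ ^ α := Real.rpow_pos_of_pos hn _
  have key : ∀ j, ‖D‖ ^ α + ‖D‖ ^ α * α / ‖D‖ ^ 2 * inner ℝ D (Δ j) +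
      c * (if ‖Δ j‖ ≤ ‖D‖ / 2 then ‖D‖ ^ (α - 2) * ‖Δ j‖ ^ 2 else ‖Δ j‖ ^ α)
        ≤ ‖D + Δ j‖ ^ α := by
    intro j
    have hi := abs_le.1 (abs_real_inner_le_norm D (Δ j))
    have h1 := h (‖D + Δ j‖ / ‖D‖) (‖Δ j‖ / ‖D‖) (inner ℝ D (Δ j) / ‖D‖ ^ 2)
      (by positivity) (by positivity)
      (by rw [div_le_div_iff₀ (by positivity) hn]; nlinarith [hi.2])
      (by rw [← neg_div, div_le_div_iff₀ hn (by positivity)]; nlinarith [hi.1])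
      (by rw [div_pow, norm_add_sq_real]; field_simp)
    have h2 := mul_le_mul_of_nonneg_left h1 hnα.le
    have e1 : ‖D‖ ^ α * (‖D + Δ j‖ / ‖D‖) ^ α = ‖D + Δ j‖ ^ α := by
      rw [Real.div_rpow (norm_nonneg _) hn.le]; field_simp
    have e2 : ‖D‖ ^ α * (if ‖Δ j‖ / ‖D‖ ≤ 1 / 2 then (‖Δ j‖ / ‖D‖) ^ 2 else (‖Δ j‖ / ‖D‖) ^ α)
        = if ‖Δ j‖ ≤ ‖D‖ / 2 then ‖D‖ ^ (α - 2) * ‖Δ j‖ ^ 2 else ‖Δ j‖ ^ α := by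
      have : ‖Δ j‖ / ‖D‖ ≤ 1 / 2 ↔ ‖Δ j‖ ≤ ‖D‖ / 2 := by
        rw [div_le_iff₀ hn]; constructor <;> intro h <;> linarith
      simp only [this]
      split_ifs
      · rw [Real.rpow_sub hn, Real.rpow_two]; field_simp
      · rw [Real.div_rpow (norm_nonneg _) hn.le]; field_simp
    rw [e1] at h2
    rw [← e2]
    calc _ = _ := by ring
      _ ≤ _ := h2
  have hs := Finset.sum_le_sum (fun j (_ : j ∈ Finset.univ) => key j)
  rw [Finset.sum_add_distrib, Finset.sum_add_distrib, ← Finset.mul_sum, ← Finset.mul_sum,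
    ← inner_sum, hΔ, inner_zero_right] at hs
  simpa using hs
end

section
/- Let d be a positive natural number, α ≥ 1 and M > 0 real numbers, and L, n, K natural numbers with L ≥ 1. Let γ : ℕ → ℝ^d be a path and let k_1 < k_2 < … < k_K be natural numbers with (k_K + 1)L ≤ n, such that for every i ∈ {1, …, K} the block displacement satisfies ‖γ((k_i + 1)L) − γ(k_i L)‖ ≥ M·L. Then the passage time satisfies ∑_{j=1}^{n} ‖γ(j) − γ(j−1)‖^α ≥ K · L · M^α. (If the geodesic has at least K blocks of length L in which its displacement exceeds ML, then its passage time grows linearly in K·L with constant M^α.) -/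
/-- If a path `γ` has `K` disjoint blocks of length `L` (indexed by
`k 1 < ⋯ < k K`) in which its displacement exceeds `M·L`, then its passage time
over the first `n` steps is at least `K · L · M^α`. -/
theorem stmt_7 (d : ℕ) (hd : 0 < d) (α M : ℝ) (hα : 1 ≤ α) (hM : 0 < M)
    (L n K : ℕ) (hL : 1 ≤ L)
    (γ : ℕ → EuclideanSpace ℝ (Fin d)) (k : Fin K → ℕ)
    (hmono : StrictMono k)
    (hn : ∀ i, (k i + 1) * L ≤ n)
    (hdisp : ∀ i, ‖γ ((k i + 1) * L) - γ (k i * L)‖ ≥ M * (L : ℝ)) :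
    ∑ j ∈ Finset.range n, ‖γ (j + 1) - γ j‖ ^ α ≥ (K : ℝ) * (L : ℝ) * M ^ α := by
  have hL0 : (0 : ℝ) < L := by exact_mod_cast hL
  have hblock : ∀ i, (L : ℝ) * M ^ α ≤
      ∑ j ∈ Finset.Ico (k i * L) ((k i + 1) * L), ‖γ (j + 1) - γ j‖ ^ α := by
    intro i
    have hle : k i * L ≤ (k i + 1) * L := Nat.mul_le_mul_right _ (Nat.le_succ _)
    have h1 : M * L ≤ ∑ j ∈ Finset.Ico (k i * L) ((k i + 1) * L), ‖γ (j + 1) - γ j‖ := by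
      refine le_trans (hdisp i) ?_
      rw [← Finset.sum_Ico_sub γ hle]
      exact norm_sum_le _ _
    have h2 := Real.rpow_sum_le_const_mul_sum_rpow_of_nonneg
      (s := Finset.Ico (k i * L) ((k i + 1) * L)) (f := fun j => ‖γ (j + 1) - γ j‖) hα
      (fun _ _ => norm_nonneg _)
    have hc : (Finset.Ico (k i * L) ((k i + 1) * L)).card = L := by
      rw [Nat.card_Ico, Nat.succ_mul, Nat.add_sub_cancel_left]
    rw [hc] at h2
    have h3 : (M * L) ^ α ≤ _ :=
      (Real.rpow_le_rpow (by positivity) h1 (by linarith)).trans h2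
    have h4 : (M * L) ^ α = (L : ℝ) ^ (α - 1) * (L * M ^ α) := by
      rw [Real.mul_rpow hM.le hL0.le, Real.rpow_sub_one hL0.ne']
      field_simp
    rw [h4] at h3
    exact le_of_mul_le_mul_left h3 (Real.rpow_pos_of_pos hL0 _)
  have hdisj : (↑(Finset.univ : Finset (Fin K)) : Set (Fin K)).PairwiseDisjoint
      (fun i => Finset.Ico (k i * L) ((k i + 1) * L)) := by
    intro i _ j _ hij
    refine Finset.disjoint_left.2 fun x hx hy => hij (hmono.injective ?_)
    rw [Finset.mem_Ico] at hx hy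
    have a := lt_of_mul_lt_mul_right (hx.1.trans_lt hy.2) (Nat.zero_le L)
    have b := lt_of_mul_lt_mul_right (hy.1.trans_lt hx.2) (Nat.zero_le L)
    omega
  have hsub : Finset.univ.biUnion (fun i => Finset.Ico (k i * L) ((k i + 1) * L))
      ⊆ Finset.range n := by
    intro x hx
    simp only [Finset.mem_biUnion, Finset.mem_univ, true_and, Finset.mem_Ico] at hx
    obtain ⟨i, hi⟩ := hx
    exact Finset.mem_range.2 (hi.2.trans_le (hn i))
  calc (K : ℝ) * L * M ^ α = ∑ _i : Fin K, (L : ℝ) * M ^ α := by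
        simp [mul_assoc]
    _ ≤ ∑ i : Fin K, ∑ j ∈ Finset.Ico (k i * L) ((k i + 1) * L), ‖γ (j + 1) - γ j‖ ^ α :=
        Finset.sum_le_sum fun i _ => hblock i
    _ = _ := (Finset.sum_biUnion hdisj).symm
    _ ≤ _ := Finset.sum_le_sum_of_subset_of_nonneg hsub
        fun _ _ _ => Real.rpow_nonneg (norm_nonneg _) _
end
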